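/- Let N ∈ ℕ, let {1,…,N} = R ⊔ S be a partition, let u ∈ {0,1}^N be supported on R and v ∈ {0,1}^N be supported on S. Then for all w, t ∈ {0,1}^N: ⟨φ+_N, ((σz(t)σx(w)) ⊗ (Π^σx_u Π^σz_v)) φ+_N⟩ = 2^{−N} (−1)^{w·u + t·v} if w is supported on R and t is supported on S, and this inner product equals 0 otherwise (i.e., if w_j ≠ 0 for some j ∈ S or t_j ≠ 0 for some j ∈ R). -/

import Mathlib

open scoped Matrix Kronecker ComplexConjugate

noncomputable section

/-- Bit vectors of length `N`, i.e. elements of `{0,1}^N`. -/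
abbrev BV (N : ℕ) := Fin N → Bool

/-- The space `Q_N` of functions `{0,1}^N → ℂ`. -/
abbrev QV (N : ℕ) := BV N → ℂ

/-- Linear operators on `Q_N`, represented as matrices in the standard basis. -/
abbrev QOp (N : ℕ) := Matrix (BV N) (BV N) ℂ

/-- Bitwise XOR of bit vectors. -/
def bvXor {N : ℕ} (x r : BV N) : BV N := fun i => xor (x i) (r i)

/-- The sign `(-1)^{s·x}` where `s·x = Σ_i s_i x_i mod 2`. -/
def bSign {N : ℕ} (s x : BV N) : ℂ :=
  (-1 : ℂ) ^ (Finset.univ.filter fun i => s i = true ∧ x i = true).card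

/-- The standard basis vector `e_x` of `Q_N`. -/
def eVec {N : ℕ} (x : BV N) : QV N := fun y => if y = x then 1 else 0

/-- Tensor product of two vectors (as functions). -/
def tensVec {α β : Type*} (f : α → ℂ) (g : β → ℂ) : α × β → ℂ := fun p => f p.1 * g p.2

/-- The Pauli parity operator `σx(r)`, sending `e_x` to `e_{x ⊕ r}`. -/
def sigmaX {N : ℕ} (r : BV N) : QOp N :=
  Matrix.of fun y x => if y = bvXor x r then 1 else 0

/-- The Pauli parity operator `σz(s)`, sending `e_x` to `(-1)^{s·x} e_x`. -/
def sigmaZ {N : ℕ} (s : BV N) : QOp N :=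
  Matrix.diagonal fun x => bSign s x

/-- The scalar `2^{-N/2}`. -/
def invSqrt2pow (N : ℕ) : ℂ := (((Real.sqrt 2)⁻¹ : ℝ) : ℂ) ^ N

/-- The maximally entangled state `φ⁺_N = 2^{-N/2} Σ_x e_x ⊗ e_x`. -/
def phiPlus (N : ℕ) : BV N × BV N → ℂ :=
  invSqrt2pow N • ∑ x : BV N, tensVec (eVec x) (eVec x)

/-- The standard (complex) inner product on a finite function space. -/
def qInner {α : Type*} [Fintype α] (f g : α → ℂ) : ℂ :=
  ∑ x, (starRingEnd ℂ) (f x) * g x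

/-- The norm associated to `qInner`. -/
def qNorm {α : Type*} [Fintype α] (f : α → ℂ) : ℝ :=
  Real.sqrt (qInner f f).re

/-- A binary observable: a self-adjoint operator squaring to the identity. -/
def IsBinaryObs {ι : Type*} [Fintype ι] [DecidableEq ι] (O : Matrix ι ι ℂ) : Prop :=
  O.IsHermitian ∧ O * O = 1

/-- For pairwise commuting operators `X i`, the parity product `X(r) = ∏_{i : r_i = 1} X_i`. -/
def obsProd {n : ℕ} {ι : Type*} [Fintype ι] [DecidableEq ι]
    (X : Fin n → Matrix ι ι ℂ) (hX : ∀ i j, Commute (X i) (X j)) (r : BV n) :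
    Matrix ι ι ℂ :=
  (Finset.univ.filter fun i => r i = true).noncommProd X fun i _ j _ _ => hX i j

/-- The set of bit vectors supported on `R`. -/
def suppSet {N : ℕ} (R : Finset (Fin N)) : Finset (BV N) :=
  Finset.univ.filter fun u => ∀ i, u i = true → i ∈ R

/-- The projector `Π^{σx}_u = 2^{-|R|} Σ_{u' supported on R} (-1)^{u·u'} σx(u')`. -/
def projPauliX {N : ℕ} (R : Finset (Fin N)) (u : BV N) : QOp N :=
  ((2 : ℂ) ^ R.card)⁻¹ • ∑ u' ∈ suppSet R, bSign u u' • sigmaX u'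

/-- The projector `Π^{σz}_v = 2^{-|S|} Σ_{v' supported on S} (-1)^{v·v'} σz(v')`. -/
def projPauliZ {N : ℕ} (S : Finset (Fin N)) (v : BV N) : QOp N :=
  ((2 : ℂ) ^ S.card)⁻¹ • ∑ v' ∈ suppSet S, bSign v v' • sigmaZ v'

/-- The projector `Π^X_u = 2^{-|R|} Σ_{u' supported on R} (-1)^{u·u'} X(u')`
for a family of commuting binary observables. -/
def projObs {N : ℕ} {ι : Type*} [Fintype ι] [DecidableEq ι]
    (X : Fin N → Matrix ι ι ℂ) (hX : ∀ i j, Commute (X i) (X j))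
    (R : Finset (Fin N)) (u : BV N) : Matrix ι ι ℂ :=
  ((2 : ℂ) ^ R.card)⁻¹ • ∑ u' ∈ suppSet R, bSign u u' • obsProd X hX u'

/-- The extracted global vector
`Φ = 2^{-N} Σ_{r,s} (X(r)Z(s) ⊗ σx(r)σz(s) ⊗ Id)(ψ ⊗ φ⁺_N)`. -/
def extractedVec {N : ℕ} {ι : Type*} [Fintype ι] [DecidableEq ι]
    (X Z : Fin N → Matrix ι ι ℂ)
    (hX : ∀ i j, Commute (X i) (X j)) (hZ : ∀ i j, Commute (Z i) (Z j))
    (ψ : ι → ℂ) : ι × BV N × BV N → ℂ :=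
  ((2 : ℂ) ^ N)⁻¹ • ∑ r : BV N, ∑ s : BV N,
    ((obsProd X hX r * obsProd Z hZ s) ⊗ₖ ((sigmaX r * sigmaZ s) ⊗ₖ (1 : QOp N))).mulVec
      (tensVec ψ (phiPlus N))

/-!
Up to normalisation `φ⁺_N` is the vectorisation of the identity matrix, so `⟨φ⁺, (A ⊗ B) φ⁺⟩` is the
normalised trace of `B Aᵀ`. Expanding the two projectors reduces the claim to the orthogonality of
the Pauli operators `σx(r) σz(s)` under the trace: of the terms `(r, s)` only `r = w`, `s = t`
survives, and it is present exactly when `w` is supported on `R` and `t` on `S`. Commuting `σz(t)`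
past `σx(w)` leaves a sign `(-1)^{t·w}`, which is `1` because `R` and `S` are disjoint.
-/

section Signs

variable {N : ℕ} (r s x y : BV N)

/-- Bit vectors form a Boolean algebra with XOR as symmetric difference; the zero bit vector is
therefore written `⊥`. -/
lemma bvXor_eq_symmDiff : bvXor x y = symmDiff x y := by
  funext i
  simp [bvXor, Pi.symmDiff_apply]

lemma bSign_eq_prod : bSign s x = ∏ i, (-1 : ℂ) ^ (s i && x i).toNat := by
  simp only [bSign, Finset.prod_pow_eq_pow_sum, Finset.card_filter, Bool.toNat, Bool.cond_eq_ite,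
    Bool.and_eq_true]

lemma bSign_comm : bSign s x = bSign x s := by
  simp only [bSign, and_comm]

lemma bSign_bvXor_right : bSign s (bvXor x y) = bSign s x * bSign s y := by
  simp only [bSign_eq_prod, ← Finset.prod_mul_distrib, bvXor]
  refine Finset.prod_congr rfl fun i _ => ?_
  cases s i <;> cases x i <;> cases y i <;> simp

lemma bSign_bvXor_left : bSign (bvXor r s) x = bSign r x * bSign s x := by
  simp only [bSign_comm _ x, bSign_bvXor_right]

variable {s x} in
lemma bSign_eq_one_of_disjoint_supp {A B : Finset (Fin N)} (hAB : Disjoint A B)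
    (hs : s ∈ suppSet A) (hx : x ∈ suppSet B) : bSign s x = 1 := by
  simp only [suppSet, Finset.mem_filter_univ] at hs hx
  have hempty : (Finset.univ.filter fun i => s i = true ∧ x i = true) = ∅ :=
    Finset.filter_eq_empty_iff.mpr fun i _ hi =>
      Finset.disjoint_left.mp hAB (hs i hi.1) (hx i hi.2)
  rw [bSign, hempty, Finset.card_empty, pow_zero]

lemma sum_bSign : ∑ x, bSign s x = if s = ⊥ then (2 : ℂ) ^ N else 0 := by
  have hfactor : ∑ x, bSign s x = ∏ i, ∑ b : Bool, (-1 : ℂ) ^ (s i && b).toNat := by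
    simp only [bSign_eq_prod, Finset.prod_univ_sum, Fintype.piFinset_univ]
  have hbit (i : Fin N) : ∑ b : Bool, (-1 : ℂ) ^ (s i && b).toNat = if s i then 0 else 2 := by
    cases s i <;> norm_num
  simp only [hfactor, hbit]
  split_ifs with hs
  · simp [hs]
  · obtain ⟨i, hi⟩ := Function.ne_iff.mp hs
    exact Finset.prod_eq_zero (Finset.mem_univ i) (by simpa using hi)

end Signs

section PauliOperators

variable {N : ℕ} (r s t w : BV N)

lemma transpose_sigmaX : (sigmaX r)ᵀ = sigmaX r := by
  ext x y
  have hswap : x = bvXor y r ↔ y = bvXor x r := by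
    simp only [bvXor_eq_symmDiff]
    constructor <;> rintro rfl <;> simp
  simp [sigmaX, hswap]

lemma transpose_sigmaZ : (sigmaZ s)ᵀ = sigmaZ s :=
  Matrix.diagonal_transpose _

lemma sigmaX_mul_sigmaX : sigmaX r * sigmaX w = sigmaX (bvXor r w) := by
  ext x y
  simp [sigmaX, Matrix.mul_apply, bvXor_eq_symmDiff, symmDiff_assoc, symmDiff_comm r w]

lemma sigmaZ_mul_sigmaZ : sigmaZ s * sigmaZ t = sigmaZ (bvXor s t) := by
  simp only [sigmaZ, Matrix.diagonal_mul_diagonal, bSign_bvXor_left]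

lemma sigmaZ_mul_sigmaX : sigmaZ s * sigmaX w = bSign s w • (sigmaX w * sigmaZ s) := by
  ext x y
  by_cases hxy : x = bvXor y w
  · simp [sigmaZ, sigmaX, hxy, bSign_bvXor_right, mul_comm]
  · simp [sigmaZ, sigmaX, hxy]

lemma trace_sigmaX_mul_sigmaZ :
    (sigmaX r * sigmaZ s).trace = if r = ⊥ ∧ s = ⊥ then (2 : ℂ) ^ N else 0 := by
  have hdiag (x : BV N) : (sigmaX r * sigmaZ s) x x = if r = ⊥ then bSign s x else 0 := by
    simp [sigmaX, sigmaZ, bvXor_eq_symmDiff, eq_comm (a := x)]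
  simp only [Matrix.trace, Matrix.diag_apply, hdiag, Finset.sum_ite_irrel, sum_bSign,
    Finset.sum_const_zero, ite_and]

lemma trace_sigmaX_mul_sigmaZ_mul_transpose :
    (sigmaX r * sigmaZ s * (sigmaZ t * sigmaX w)ᵀ).trace =
      if r = w ∧ s = t then (2 : ℂ) ^ N * bSign t w else 0 := by
  have hnormal : sigmaX r * sigmaZ s * (sigmaZ t * sigmaX w)ᵀ =
      bSign s w • (sigmaX (bvXor r w) * sigmaZ (bvXor s t)) :=
    calc sigmaX r * sigmaZ s * (sigmaZ t * sigmaX w)ᵀ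
        = sigmaX r * (sigmaZ s * sigmaX w) * sigmaZ t := by
          simp only [Matrix.transpose_mul, transpose_sigmaX, transpose_sigmaZ, Matrix.mul_assoc]
      _ = bSign s w • ((sigmaX r * sigmaX w) * (sigmaZ s * sigmaZ t)) := by
          simp only [sigmaZ_mul_sigmaX, Matrix.mul_smul, Matrix.smul_mul, Matrix.mul_assoc]
      _ = bSign s w • (sigmaX (bvXor r w) * sigmaZ (bvXor s t)) := by
          rw [sigmaX_mul_sigmaX, sigmaZ_mul_sigmaZ]
  rw [hnormal, Matrix.trace_smul, trace_sigmaX_mul_sigmaZ]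
  simp only [bvXor_eq_symmDiff, symmDiff_eq_bot, smul_eq_mul, mul_ite, mul_zero]
  exact ite_congr rfl (fun h => by rw [h.2, mul_comm]) fun _ => rfl

lemma projPauliX_mul_projPauliZ (R S : Finset (Fin N)) (u v : BV N) :
    projPauliX R u * projPauliZ S v =
      ((2 : ℂ) ^ (R.card + S.card))⁻¹ •
        ∑ r ∈ suppSet R, ∑ s ∈ suppSet S, (bSign u r * bSign v s) • (sigmaX r * sigmaZ s) := by
  rw [projPauliX, projPauliZ, smul_mul_smul_comm, ← mul_inv, ← pow_add, Finset.sum_mul_sum]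
  simp only [smul_mul_smul_comm]

end PauliOperators

section MaximallyEntangledState

lemma star_vec_one_dotProduct_kronecker_mulVec_vec_one {n α : Type*} [Fintype n] [DecidableEq n]
    [CommSemiring α] [StarRing α] (A B : Matrix n n α) :
    star (Matrix.vec 1) ⬝ᵥ (A ⊗ₖ B) *ᵥ Matrix.vec 1 = (B * Aᵀ).trace := by
  rw [Matrix.kronecker_mulVec_vec, Matrix.star_vec_dotProduct_vec, Matrix.conjTranspose_one,
    Matrix.one_mul, Matrix.mul_one]

lemma star_invSqrt2pow_mul_self (N : ℕ) :
    star (invSqrt2pow N) * invSqrt2pow N = ((2 : ℂ) ^ N)⁻¹ := by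
  have hsqrt : ((√2)⁻¹ * (√2)⁻¹ : ℝ) = 2⁻¹ := by
    rw [← mul_inv, Real.mul_self_sqrt zero_le_two]
  rw [invSqrt2pow, star_pow, Complex.star_def, Complex.conj_ofReal, ← mul_pow,
    ← Complex.ofReal_mul, hsqrt]
  simp

lemma phiPlus_eq_smul_vec_one (N : ℕ) : phiPlus N = invSqrt2pow N • Matrix.vec (1 : QOp N) := by
  ext ⟨x, y⟩
  simp [phiPlus, tensVec, eVec, Matrix.vec, Matrix.one_apply, eq_comm]

lemma qInner_phiPlus_kronecker {N : ℕ} (A B : QOp N) :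
    qInner (phiPlus N) ((A ⊗ₖ B).mulVec (phiPlus N)) = ((2 : ℂ) ^ N)⁻¹ * (B * Aᵀ).trace := by
  change star (phiPlus N) ⬝ᵥ (A ⊗ₖ B) *ᵥ phiPlus N = _
  rw [phiPlus_eq_smul_vec_one, Matrix.mulVec_smul, star_smul, smul_dotProduct, dotProduct_smul,
    star_vec_one_dotProduct_kronecker_mulVec_vec_one, smul_smul, star_invSqrt2pow_mul_self,
    smul_eq_mul]

end MaximallyEntangledState

theorem phiPlus_pauli_projector_inner_general {N : ℕ} (R S : Finset (Fin N)) (u v w t : BV N) :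
    qInner (phiPlus N)
        (((sigmaZ t * sigmaX w) ⊗ₖ (projPauliX R u * projPauliZ S v)).mulVec (phiPlus N))
      = if w ∈ suppSet R ∧ t ∈ suppSet S
          then ((2 : ℂ) ^ (R.card + S.card))⁻¹ * bSign w u * bSign t v * bSign t w
          else 0 := by
  have hexpand : (projPauliX R u * projPauliZ S v * (sigmaZ t * sigmaX w)ᵀ).trace =
      ((2 : ℂ) ^ (R.card + S.card))⁻¹ * ∑ r ∈ suppSet R, ∑ s ∈ suppSet S,
        bSign u r * bSign v s * if r = w ∧ s = t then (2 : ℂ) ^ N * bSign t w else 0 := by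
    simp only [projPauliX_mul_projPauliZ, Matrix.smul_mul, Finset.sum_mul, Matrix.trace_smul,
      Matrix.trace_sum, trace_sigmaX_mul_sigmaZ_mul_transpose, smul_eq_mul]
  rw [qInner_phiPlus_kronecker, hexpand]
  simp only [ite_and, mul_ite, mul_zero, Finset.sum_ite_eq', Finset.sum_ite_irrel,
    Finset.sum_const_zero]
  refine ite_congr rfl (fun _ => ite_congr rfl (fun _ => ?_) fun _ => rfl) fun _ => rfl
  rw [bSign_comm w u, bSign_comm t v]
  field_simp

/-- inner products of `φ⁺_N` against `σz(t)σx(w) ⊗ Π^{σx}_u Π^{σz}_v`. -/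
theorem phiPlus_pauli_projector_inner (N : ℕ) (R S : Finset (Fin N))
    (hRS : Disjoint R S) (hRScover : R ∪ S = Finset.univ)
    (u v : BV N) (hu : u ∈ suppSet R) (hv : v ∈ suppSet S) (w t : BV N) :
    qInner (phiPlus N)
        (((sigmaZ t * sigmaX w) ⊗ₖ (projPauliX R u * projPauliZ S v)).mulVec (phiPlus N))
      = if w ∈ suppSet R ∧ t ∈ suppSet S
          then ((2 : ℂ) ^ N)⁻¹ * bSign w u * bSign t v
          else 0 := by
  have hcard : R.card + S.card = N := by
    rw [← Finset.card_union_of_disjoint hRS, hRScover, Finset.card_univ, Fintype.card_fin]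
  rw [phiPlus_pauli_projector_inner_general, hcard]
  refine ite_congr rfl (fun hwt => ?_) fun _ => rfl
  rw [bSign_eq_one_of_disjoint_supp hRS.symm hwt.2 hwt.1, mul_one]

end
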